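/- arXiv:2010.02028 — 3 statements merged into one kernel-verified Lean document; each statement's English description precedes it below -/
import Mathlib

section
/- Let V be the real vector space with basis consisting of elements J_{ab} for 0 ≤ a < b ≤ 3 (with the conventions J_{ba} := −J_{ab} and J_{aa} := 0) together with elements P_{cd} for all c,d ∈ {0,1,2,3}. Define a bilinear bracket on V by the relations [P_{ab}, P_{cd}] = 0, [J_{ab}, P_{cd}] = −η_{ac} P_{bd} + η_{bc} P_{ad}, [P_{cd}, J_{ab}] = −[J_{ab}, P_{cd}], and [J_{ab}, J_{cd}] = −η_{ac} J_{bd} + η_{bc} J_{ad} − η_{bd} J_{ac} + η_{ad} J_{bc}. Then this bracket is alternating and satisfies the Jacobi identity; that is, it makes V a real Lie algebra (the co-Poincaré algebra 𝔤_cP). -/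
open scoped BigOperators

/-- Minkowski metric diag(1,-1,-1,-1) on index set {0,1,2,3}. -/
noncomputable def eta (a b : Fin 4) : ℝ :=
  if a = b then (if a = 0 then 1 else -1) else 0

/-- Basis index set: J_{ab} for a < b, together with P_{cd} for all c,d. -/
abbrev CoPIdx : Type := ({x : Fin 4 × Fin 4 // x.1 < x.2}) ⊕ (Fin 4 × Fin 4)

/-- The underlying real vector space with the above basis. -/
abbrev CoPSpace : Type := CoPIdx → ℝ

/-- The generators J_{ab}, with the conventions J_{ba} = -J_{ab} and J_{aa} = 0. -/
noncomputable def Jgen (a b : Fin 4) : CoPSpace :=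
  if h : a < b then Pi.single (Sum.inl ⟨(a, b), h⟩) 1
  else if h' : b < a then -Pi.single (Sum.inl ⟨(b, a), h'⟩) 1
  else 0

/-- The generators P_{cd}. -/
noncomputable def Pgen (c d : Fin 4) : CoPSpace :=
  Pi.single (Sum.inr (c, d)) 1

/-- The bracket on basis elements, encoding the defining relations
[J_{ab}, P_{cd}] = -η_{ac} P_{bd} + η_{bc} P_{ad}, [P,P] = 0,
[P_{cd}, J_{ab}] = -[J_{ab}, P_{cd}], and
[J_{ab}, J_{cd}] = -η_{ac} J_{bd} + η_{bc} J_{ad} - η_{bd} J_{ac} + η_{ad} J_{bc}. -/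
noncomputable def brBasis : CoPIdx → CoPIdx → CoPSpace
  | Sum.inl ⟨(a, b), _⟩, Sum.inl ⟨(c, d), _⟩ =>
      -(eta a c) • Jgen b d + (eta b c) • Jgen a d
        - (eta b d) • Jgen a c + (eta a d) • Jgen b c
  | Sum.inl ⟨(a, b), _⟩, Sum.inr (c, d) =>
      -(eta a c) • Pgen b d + (eta b c) • Pgen a d
  | Sum.inr (c, d), Sum.inl ⟨(a, b), _⟩ =>
      -(-(eta a c) • Pgen b d + (eta b c) • Pgen a d)
  | Sum.inr _, Sum.inr _ => 0

/-- The bilinear extension of the basis bracket to all of the space. -/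
noncomputable def brkt (x y : CoPSpace) : CoPSpace :=
  ∑ i : CoPIdx, ∑ j : CoPIdx, (x i * y j) • brBasis i j

theorem cp_left (r : ℝ) (x y z : CoPSpace) :
    brkt (r • x + y) z = r • brkt x z + brkt y z := by
  simp only [brkt, Finset.smul_sum, ← Finset.sum_add_distrib, Pi.add_apply, Pi.smul_apply,
    smul_eq_mul]
  refine Finset.sum_congr rfl fun i _ => Finset.sum_congr rfl fun j _ => ?_
  module

theorem cp_right (r : ℝ) (x y z : CoPSpace) :
    brkt x (r • y + z) = r • brkt x y + brkt x z := by
  simp only [brkt, Finset.smul_sum, ← Finset.sum_add_distrib, Pi.add_apply, Pi.smul_apply,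
    smul_eq_mul]
  refine Finset.sum_congr rfl fun i _ => Finset.sum_congr rfl fun j _ => ?_
  module

theorem cp_zero_left (z : CoPSpace) : brkt 0 z = 0 := by simp [brkt]
theorem cp_zero_right (z : CoPSpace) : brkt z 0 = 0 := by simp [brkt]
theorem cp_add_left (x y z : CoPSpace) : brkt (x + y) z = brkt x z + brkt y z := by
  simpa using cp_left 1 x y z
theorem cp_add_right (x y z : CoPSpace) : brkt z (x + y) = brkt z x + brkt z y := by
  simpa using cp_right 1 z x y
theorem cp_smul_left (r : ℝ) (x z : CoPSpace) : brkt (r • x) z = r • brkt x z := by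
  simpa [cp_zero_left] using cp_left r x 0 z
theorem cp_smul_right (r : ℝ) (x z : CoPSpace) : brkt z (r • x) = r • brkt z x := by
  simpa [cp_zero_right] using cp_right r z x 0
theorem cp_neg_left (x z : CoPSpace) : brkt (-x) z = -brkt x z := by
  simpa using cp_smul_left (-1) x z
theorem cp_neg_right (x z : CoPSpace) : brkt z (-x) = -brkt z x := by
  simpa using cp_smul_right (-1) x z
theorem cp_sub_right (x y z : CoPSpace) : brkt z (x - y) = brkt z x - brkt z y := by
  rw [sub_eq_add_neg, cp_add_right, cp_neg_right, sub_eq_add_neg]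

theorem cp_single (i j : CoPIdx) :
    brkt (Pi.single i 1) (Pi.single j 1) = brBasis i j := by
  unfold brkt
  rw [Finset.sum_eq_single i, Finset.sum_eq_single j]
  · simp
  · intro k _ hk; simp [hk]
  · simp
  · intro k _ hk; simp [hk]
  · simp

theorem Jgen_lt {a b : Fin 4} (h : a < b) : Jgen a b = Pi.single (Sum.inl ⟨(a, b), h⟩) 1 := by
  simp [Jgen, h]

theorem Jgen_self (a : Fin 4) : Jgen a a = 0 := by simp [Jgen]

theorem Jgen_anti (a b : Fin 4) : Jgen a b = -Jgen b a := by
  rcases lt_trichotomy a b with h | h | h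
  · simp [Jgen, h, h.not_gt]
  · subst h; simp [Jgen]
  · simp [Jgen, h, h.not_gt]

theorem eta_symm (a b : Fin 4) : eta a b = eta b a := by
  unfold eta
  by_cases h : a = b
  · subst h; rfl
  · simp [h, Ne.symm h]

theorem cp_PP (a b c d : Fin 4) : brkt (Pgen a b) (Pgen c d) = 0 := by
  simp only [Pgen, cp_single]; rfl

theorem cp_JP (a b c d : Fin 4) : brkt (Jgen a b) (Pgen c d)
    = -(eta a c) • Pgen b d + (eta b c) • Pgen a d := by
  have key : ∀ a b : Fin 4, a < b → brkt (Jgen a b) (Pgen c d)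
    = -(eta a c) • Pgen b d + (eta b c) • Pgen a d := by
    intro a b h
    rw [Jgen_lt h]; simp only [Pgen, cp_single]; rfl
  rcases lt_trichotomy a b with h | h | h
  · exact key a b h
  · subst h; rw [Jgen_self, cp_zero_left]; module
  · rw [Jgen_anti, cp_neg_left, key b a h]; module

theorem cp_PJ (a b c d : Fin 4) : brkt (Pgen c d) (Jgen a b)
    = -(-(eta a c) • Pgen b d + (eta b c) • Pgen a d) := by
  have key : ∀ a b : Fin 4, a < b → brkt (Pgen c d) (Jgen a b)
    = -(-(eta a c) • Pgen b d + (eta b c) • Pgen a d) := by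
    intro a b h
    rw [Jgen_lt h]; simp only [Pgen, cp_single]; rfl
  rcases lt_trichotomy a b with h | h | h
  · exact key a b h
  · subst h; rw [Jgen_self, cp_zero_right]; module
  · rw [Jgen_anti, cp_neg_right, key b a h]; module

theorem cp_JJ (a b c d : Fin 4) : brkt (Jgen a b) (Jgen c d)
        = -(eta a c) • Jgen b d + (eta b c) • Jgen a d
          - (eta b d) • Jgen a c + (eta a d) • Jgen b c := by
  have key : ∀ a b c d : Fin 4, a < b → c < d → brkt (Jgen a b) (Jgen c d)
        = -(eta a c) • Jgen b d + (eta b c) • Jgen a d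
          - (eta b d) • Jgen a c + (eta a d) • Jgen b c := by
    intro a b c d h h'
    rw [Jgen_lt h, Jgen_lt h', cp_single]; rfl
  have key2 : ∀ a b c d : Fin 4, a < b → brkt (Jgen a b) (Jgen c d)
        = -(eta a c) • Jgen b d + (eta b c) • Jgen a d
          - (eta b d) • Jgen a c + (eta a d) • Jgen b c := by
    intro a b c d h'
    rcases lt_trichotomy c d with h | h | h
    · exact key a b c d h' h
    · subst h; rw [Jgen_self, cp_zero_right]; module
    · rw [Jgen_anti c d, cp_neg_right, key a b d c h' h]; module
  rcases lt_trichotomy a b with h | h | h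
  · exact key2 a b c d h
  · subst h; rw [Jgen_self, cp_zero_left]; module
  · rw [Jgen_anti a b, cp_neg_left, key2 b a c d h]; module

theorem cp_ind (p : CoPSpace → Prop) (h0 : p 0)
    (ha : ∀ (r : ℝ) x y, p x → p y → p (r • x + y))
    (hJ : ∀ a b, p (Jgen a b)) (hP : ∀ a b, p (Pgen a b)) (x : CoPSpace) : p x := by
  have hs : ∀ i : CoPIdx, p (Pi.single i 1) := by
    rintro (⟨⟨a, b⟩, h⟩ | ⟨a, b⟩)
    · have := hJ a b
      rwa [Jgen_lt h] at this
    · exact hP a b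
  have hx : x = ∑ i, x i • (Pi.single i 1 : CoPSpace) := by
    ext j
    simp [Finset.sum_apply, Pi.single_apply]
  rw [hx]
  refine Finset.sum_induction _ p (fun a b h h' => ?_) h0 (fun i _ => ?_)
  · simpa using ha 1 a b h h'
  · simpa using ha (x i) _ 0 (hs i) h0

theorem cp_anti (x y : CoPSpace) : brkt x y = -brkt y x := by
  induction x using cp_ind with
  | h0 => simp [cp_zero_left, cp_zero_right]
  | ha r u v hu hv => rw [cp_left, cp_right, hu, hv]; module
  | hP a b =>
    induction y using cp_ind with
    | h0 => simp [cp_zero_left, cp_zero_right]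
    | ha r u v hu hv => rw [cp_left, cp_right, hu, hv]; module
    | hP c d => simp [cp_PP]
    | hJ c d => rw [cp_JP, cp_PJ]
  | hJ a b =>
    induction y using cp_ind with
    | h0 => simp [cp_zero_left, cp_zero_right]
    | ha r u v hu hv => rw [cp_left, cp_right, hu, hv]; module
    | hP c d => rw [cp_JP, cp_PJ]; module
    | hJ c d =>
      rw [cp_JJ, cp_JJ]
      simp only [Jgen_anti c a, Jgen_anti c b, Jgen_anti d a, Jgen_anti d b,
        eta_symm c a, eta_symm c b, eta_symm d a, eta_symm d b]
      module

/-- The Jacobiator. -/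
noncomputable def cpJac (x y z : CoPSpace) : CoPSpace :=
  brkt x (brkt y z) + brkt y (brkt z x) + brkt z (brkt x y)

theorem cpJac_cyc (x y z : CoPSpace) : cpJac x y z = cpJac y z x := by
  unfold cpJac; abel

theorem cpJac_zero (y z : CoPSpace) : cpJac 0 y z = 0 := by
  simp [cpJac, cp_zero_left, cp_zero_right]

theorem cpJac_lin (r : ℝ) (u v y z : CoPSpace) :
    cpJac (r • u + v) y z = r • cpJac u y z + cpJac v y z := by
  simp only [cpJac, cp_left, cp_right]; module

theorem cpJac_ind (y z : CoPSpace) (hJ : ∀ a b, cpJac (Jgen a b) y z = 0)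
    (hP : ∀ a b, cpJac (Pgen a b) y z = 0) (x : CoPSpace) : cpJac x y z = 0 := by
  induction x using cp_ind with
  | h0 => exact cpJac_zero y z
  | ha r u v hu hv => rw [cpJac_lin, hu, hv]; simp
  | hJ a b => exact hJ a b
  | hP a b => exact hP a b

theorem cpJac_PPP (a b c d e f : Fin 4) : cpJac (Pgen a b) (Pgen c d) (Pgen e f) = 0 := by
  simp [cpJac, cp_PP, cp_zero_right]

theorem cpJac_JPP (a b c d e f : Fin 4) : cpJac (Jgen a b) (Pgen c d) (Pgen e f) = 0 := by
  simp only [cpJac, cp_PP, cp_JP, cp_PJ, cp_zero_right, cp_add_right, cp_neg_right,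
    cp_smul_right]
  simp

theorem cpJac_JJP (a b c d e f : Fin 4) : cpJac (Jgen a b) (Jgen c d) (Pgen e f) = 0 := by
  simp only [cpJac, cp_JJ, cp_JP, cp_PJ, cp_sub_right, cp_add_right, cp_neg_right,
    cp_smul_right, eta_symm c a, eta_symm c b, eta_symm d a, eta_symm d b]
  module

theorem cpJac_JJJ (a b c d e f : Fin 4) : cpJac (Jgen a b) (Jgen c d) (Jgen e f) = 0 := by
  simp only [cpJac, cp_JJ, cp_sub_right, cp_add_right, cp_neg_right,
    cp_smul_right, eta_symm c a, eta_symm c b, eta_symm d a, eta_symm d b,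
    eta_symm e a, eta_symm e b, eta_symm f a, eta_symm f b,
    eta_symm e c, eta_symm e d, eta_symm f c, eta_symm f d,
    Jgen_anti c a, Jgen_anti c b, Jgen_anti d a, Jgen_anti d b,
    Jgen_anti e a, Jgen_anti e b, Jgen_anti f a, Jgen_anti f b,
    Jgen_anti e c, Jgen_anti e d, Jgen_anti f c, Jgen_anti f d]
  module

theorem cpJac_eq (x y z : CoPSpace) : cpJac x y z = 0 := by
  refine cpJac_ind y z (fun a b => ?_) (fun a b => ?_) x
  · rw [cpJac_cyc]
    refine cpJac_ind _ _ (fun c d => ?_) (fun c d => ?_) y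
    · rw [cpJac_cyc]
      refine cpJac_ind _ _ (fun e f => ?_) (fun e f => ?_) z
      · exact cpJac_JJJ ..
      · rw [cpJac_cyc]; exact cpJac_JJP ..
    · rw [cpJac_cyc]
      refine cpJac_ind _ _ (fun e f => ?_) (fun e f => ?_) z
      · exact cpJac_JJP ..
      · rw [cpJac_cyc]; exact cpJac_JPP ..
  · rw [cpJac_cyc]
    refine cpJac_ind _ _ (fun c d => ?_) (fun c d => ?_) y
    · rw [cpJac_cyc]
      refine cpJac_ind _ _ (fun e f => ?_) (fun e f => ?_) z
      · rw [cpJac_cyc, cpJac_cyc]; exact cpJac_JJP ..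
      · rw [cpJac_cyc, cpJac_cyc]; exact cpJac_JPP ..
    · rw [cpJac_cyc]
      refine cpJac_ind _ _ (fun e f => ?_) (fun e f => ?_) z
      · exact cpJac_JPP ..
      · exact cpJac_PPP ..

/-- the bracket defined by the co-Poincaré relations is bilinear,
satisfies the defining relations on the generators, is alternating, and
satisfies the Jacobi identity; that is, it makes the space a real Lie
algebra (the co-Poincaré algebra 𝔤_cP). -/
theorem coPoincare_isLieAlgebra :
    (∀ (r : ℝ) (x y z : CoPSpace), brkt (r • x + y) z = r • brkt x z + brkt y z) ∧
    (∀ (r : ℝ) (x y z : CoPSpace), brkt x (r • y + z) = r • brkt x y + brkt x z) ∧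
    (∀ a b c d : Fin 4, brkt (Pgen a b) (Pgen c d) = 0) ∧
    (∀ a b c d : Fin 4, brkt (Jgen a b) (Pgen c d)
        = -(eta a c) • Pgen b d + (eta b c) • Pgen a d) ∧
    (∀ a b c d : Fin 4, brkt (Pgen c d) (Jgen a b) = -brkt (Jgen a b) (Pgen c d)) ∧
    (∀ a b c d : Fin 4, brkt (Jgen a b) (Jgen c d)
        = -(eta a c) • Jgen b d + (eta b c) • Jgen a d
          - (eta b d) • Jgen a c + (eta a d) • Jgen b c) ∧
    (∀ x : CoPSpace, brkt x x = 0) ∧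
    (∀ x y z : CoPSpace, brkt x (brkt y z) + brkt y (brkt z x) + brkt z (brkt x y) = 0) := by
  refine ⟨cp_left, cp_right, cp_PP, cp_JP, fun a b c d => cp_anti _ _, cp_JJ, fun x => ?_,
    fun x y z => cpJac_eq x y z⟩
  exact self_eq_neg.mp (cp_anti x x)
end

section
/- The Schwarzschild vierbein and spin connection satisfy the torsionless condition: T^a_{μν} = 0 on U for all a, μ, ν ∈ {0,1,2,3}. -/
open scoped BigOperators

/-- Levi-Civita symbol ε_{abcd} on {0,1,2,3}. -/
noncomputable def eps (a b c d : Fin 4) : ℝ :=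
  ∑ σ : Equiv.Perm (Fin 4),
    if ![a, b, c, d] = ⇑σ then ((Equiv.Perm.sign σ : ℤ) : ℝ) else 0

/-- Partial derivative in the μ-th coordinate direction of ℝ⁴. -/
noncomputable def pd (μ : Fin 4) (F : (Fin 4 → ℝ) → ℝ) (x : Fin 4 → ℝ) : ℝ :=
  fderiv ℝ F x (Pi.single μ 1)

/-- f(r) = √(1 − 2Gm/r); the coordinates are x = (t,r,θ,φ). -/
noncomputable def fS (G m : ℝ) (x : Fin 4 → ℝ) : ℝ :=
  Real.sqrt (1 - 2 * G * m / x 1)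

/-- The Schwarzschild chart U = {r > 2Gm, r > 0, 0 < θ < π}. -/
def Uchart (G m : ℝ) : Set (Fin 4 → ℝ) :=
  {x | 2 * G * m < x 1 ∧ 0 < x 1 ∧ 0 < x 2 ∧ x 2 < Real.pi}

/-- The Schwarzschild vierbein E^a_μ: E⁰_t = f, E¹_r = 1/f, E²_θ = r,
E³_φ = r sin θ, all other components zero. -/
noncomputable def Evb (G m : ℝ) (x : Fin 4 → ℝ) : Fin 4 → Fin 4 → ℝ :=
  ![![fS G m x, 0, 0, 0],
    ![0, (fS G m x)⁻¹, 0, 0],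
    ![0, 0, x 1, 0],
    ![0, 0, 0, x 1 * Real.sin (x 2)]]

/-- The Schwarzschild spin connection ω_μ^{ab}, antisymmetric in (a,b), with
nonzero components ω_t^{01} = −Gm/r², ω_θ^{12} = f, ω_φ^{13} = f sin θ,
ω_φ^{23} = cos θ (indexed as `sw G m x μ a b`). -/
noncomputable def sw (G m : ℝ) (x : Fin 4 → ℝ) : Fin 4 → Fin 4 → Fin 4 → ℝ :=
  ![![![0, -(G * m) / (x 1) ^ 2, 0, 0],
     ![(G * m) / (x 1) ^ 2, 0, 0, 0],
     ![0, 0, 0, 0],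
     ![0, 0, 0, 0]],
    ![![0, 0, 0, 0], ![0, 0, 0, 0], ![0, 0, 0, 0], ![0, 0, 0, 0]],
    ![![0, 0, 0, 0],
     ![0, 0, fS G m x, 0],
     ![0, -fS G m x, 0, 0],
     ![0, 0, 0, 0]],
    ![![0, 0, 0, 0],
     ![0, 0, 0, fS G m x * Real.sin (x 2)],
     ![0, 0, 0, Real.cos (x 2)],
     ![0, -(fS G m x * Real.sin (x 2)), -Real.cos (x 2), 0]]]

/-- The index-lowered spin connection ω_μ^a{}_c = Σ_b ω_μ^{ab} η_{bc}. -/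
noncomputable def swl (G m : ℝ) (x : Fin 4 → ℝ) (μ a c : Fin 4) : ℝ :=
  ∑ b : Fin 4, sw G m x μ a b * eta b c

/-- Torsion components T^a_{μν} of the Schwarzschild data. -/
noncomputable def Tor (G m : ℝ) (x : Fin 4 → ℝ) (a μ ν : Fin 4) : ℝ :=
  pd μ (fun y => Evb G m y a ν) x - pd ν (fun y => Evb G m y a μ) x
    + ∑ c : Fin 4, (swl G m x μ a c * Evb G m x c ν - swl G m x ν a c * Evb G m x c μ)

/-- Curvature components R^{ab}_{μν} of the Schwarzschild spin connection. -/
noncomputable def Rcurv (G m : ℝ) (x : Fin 4 → ℝ) (a b μ ν : Fin 4) : ℝ :=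
  pd μ (fun y => sw G m y ν a b) x - pd ν (fun y => sw G m y μ a b) x
    + ∑ c : Fin 4, (swl G m x μ a c * sw G m x ν c b - swl G m x ν a c * sw G m x μ c b)

theorem aux_hasF (G m : ℝ) (x : Fin 4 → ℝ) (hx : x ∈ Uchart G m) :
    0 < fS G m x ∧ HasFDerivAt (fS G m)
      ((G * m / (x 1) ^ 2 / fS G m x) • (ContinuousLinearMap.proj 1 : (Fin 4 → ℝ) →L[ℝ] ℝ)) x := by
  obtain ⟨h1, h2, -, -⟩ := hx
  have hpos : 0 < 1 - 2 * G * m / x 1 := by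
    rw [sub_pos, div_lt_one h2]; exact h1
  have hf : 0 < fS G m x := Real.sqrt_pos.mpr hpos
  refine ⟨hf, ?_⟩
  have hd : HasDerivAt (fun r : ℝ => Real.sqrt (1 - 2 * G * m / r))
      (G * m / (x 1) ^ 2 / fS G m x) (x 1) := by
    have h := ((((hasDerivAt_inv h2.ne').const_mul (2 * G * m)).const_sub 1).sqrt
      (by rw [← div_eq_mul_inv]; exact hpos.ne'))
    simp only [← div_eq_mul_inv] at h
    convert h using 1
    have : fS G m x = Real.sqrt (1 - 2 * G * m / x 1) := rfl
    rw [← this]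
    field_simp
  have hp : HasFDerivAt (fun y : Fin 4 → ℝ => y 1)
      (ContinuousLinearMap.proj 1 : (Fin 4 → ℝ) →L[ℝ] ℝ) x := hasFDerivAt_apply 1 x
  have hc := HasDerivAt.comp_hasFDerivAt (f := fun y : Fin 4 → ℝ => y 1) x hd hp
  exact hc

theorem aux_pd_f (G m : ℝ) (x : Fin 4 → ℝ) (hx : x ∈ Uchart G m) (μ : Fin 4) :
    pd μ (fun y => fS G m y) x = if μ = 1 then G * m / (x 1) ^ 2 / fS G m x else 0 := by
  unfold pd
  have h : HasFDerivAt (fun y => fS G m y) _ x := (aux_hasF G m x hx).2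
  rw [h.fderiv]
  fin_cases μ <;> simp

theorem aux_pd_finv (G m : ℝ) (x : Fin 4 → ℝ) (hx : x ∈ Uchart G m) (μ : Fin 4) (hμ : μ ≠ 1) :
    pd μ (fun y => (fS G m y)⁻¹) x = 0 := by
  unfold pd
  obtain ⟨h0, h⟩ := aux_hasF G m x hx
  have h' : HasFDerivAt (fun y => (fS G m y)⁻¹) _ x :=
    (hasDerivAt_inv h0.ne').comp_hasFDerivAt x h
  rw [h'.fderiv]
  fin_cases μ <;> simp at hμ ⊢

theorem aux_pd_r (x : Fin 4 → ℝ) (μ : Fin 4) :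
    pd μ (fun y => y 1) x = if μ = 1 then 1 else 0 := by
  unfold pd
  have hp : HasFDerivAt (fun y : Fin 4 → ℝ => y 1)
      (ContinuousLinearMap.proj 1 : (Fin 4 → ℝ) →L[ℝ] ℝ) x := hasFDerivAt_apply 1 x
  rw [hp.fderiv]
  fin_cases μ <;> simp

theorem aux_pd_rs (x : Fin 4 → ℝ) (μ : Fin 4) :
    pd μ (fun y => y 1 * Real.sin (y 2)) x =
      if μ = 1 then Real.sin (x 2) else if μ = 2 then x 1 * Real.cos (x 2) else 0 := by
  unfold pd
  have hp : HasFDerivAt (fun y : Fin 4 → ℝ => y 1)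
      (ContinuousLinearMap.proj 1 : (Fin 4 → ℝ) →L[ℝ] ℝ) x := hasFDerivAt_apply 1 x
  have hq : HasFDerivAt (fun y : Fin 4 → ℝ => y 2)
      (ContinuousLinearMap.proj 2 : (Fin 4 → ℝ) →L[ℝ] ℝ) x := hasFDerivAt_apply 2 x
  have h : HasFDerivAt (fun y : Fin 4 → ℝ => y 1 * Real.sin (y 2)) _ x := hp.mul hq.sin
  rw [h.fderiv]
  fin_cases μ <;> simp

theorem aux_pd_zero (x : Fin 4 → ℝ) (μ : Fin 4) : pd μ (fun _ => (0 : ℝ)) x = 0 := by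
  simp [pd]

/-- the Schwarzschild vierbein and spin connection satisfy the
torsionless condition T^a_{μν} = 0 on U. -/
theorem schwarzschild_torsionless (G m : ℝ) (hG : 0 < G) (hm : 0 ≤ m)
    (x : Fin 4 → ℝ) (hx : x ∈ Uchart G m) (a μ ν : Fin 4) :
    Tor G m x a μ ν = 0 := by
  have h0 := (aux_hasF G m x hx).1.ne'
  have hr : x 1 ≠ 0 := hx.2.1.ne'
  have hf := aux_pd_f G m x hx
  have hi0 := aux_pd_finv G m x hx 0 (by decide)
  have hi2 := aux_pd_finv G m x hx 2 (by decide)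
  have hi3 := aux_pd_finv G m x hx 3 (by decide)
  have hr1 := aux_pd_r x
  have hrs := aux_pd_rs x
  have hz := aux_pd_zero x
  unfold Tor swl
  fin_cases a <;> fin_cases μ <;> fin_cases ν <;>
    simp [Fin.sum_univ_four, eta, Evb, sw, hf, hi0, hi2, hi3, hr1, hrs, hz] <;>
    field_simp <;> ring
end

section
/- The Schwarzschild data satisfy the vacuum Einstein equation ε_{a∘∘∘} R^{∘∘} ∧ e^∘ = 0: for every a ∈ {0,1,2,3} and all coordinate indices μ, ν, ρ ∈ {0,1,2,3}, Σ_{b1,b2,c} ε_{a b1 b2 c} ( R^{b1 b2}_{μν} E^c_ρ + R^{b1 b2}_{νρ} E^c_μ + R^{b1 b2}_{ρμ} E^c_ν ) = 0 on U. -/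
open scoped BigOperators

theorem eps_eq (a b c d : Fin 4) : eps a b c d =
    (((((b:ℕ):ℤ)-((a:ℕ):ℤ))*(((c:ℕ):ℤ)-((a:ℕ):ℤ))*(((d:ℕ):ℤ)-((a:ℕ):ℤ))
      *(((c:ℕ):ℤ)-((b:ℕ):ℤ))*(((d:ℕ):ℤ)-((b:ℕ):ℤ))*(((d:ℕ):ℤ)-((c:ℕ):ℤ)) : ℤ) : ℝ) / 12 := by
  have key : ∀ a b c d : Fin 4,
      12 * (∑ σ : Equiv.Perm (Fin 4),
        if (a = σ 0 ∧ b = σ 1 ∧ c = σ 2 ∧ d = σ 3) then (Equiv.Perm.sign σ : ℤ) else 0) =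
      ((((b:ℕ):ℤ)-((a:ℕ):ℤ))*(((c:ℕ):ℤ)-((a:ℕ):ℤ))*(((d:ℕ):ℤ)-((a:ℕ):ℤ))
      *(((c:ℕ):ℤ)-((b:ℕ):ℤ))*(((d:ℕ):ℤ)-((b:ℕ):ℤ))*(((d:ℕ):ℤ)-((c:ℕ):ℤ)) : ℤ) := by
    decide +kernel
  rw [← key a b c d]
  have h : ∀ σ : Equiv.Perm (Fin 4), (![a, b, c, d] = ⇑σ) ↔
      (a = σ 0 ∧ b = σ 1 ∧ c = σ 2 ∧ d = σ 3) := by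
    intro σ
    rw [funext_iff, Fin.forall_fin_succ, Fin.forall_fin_succ, Fin.forall_fin_succ,
      Fin.forall_fin_succ]
    simp
  unfold eps
  simp only [h]
  push_cast
  ring

/-- The sectional curvature table. -/
noncomputable def KS (b c : Fin 4) : ℝ :=
  (![![0, -2, 1, 1], ![-2, 0, 1, 1], ![1, 1, 0, -2], ![1, 1, -2, 0]] : Fin 4 → Fin 4 → ℝ) b c

theorem pd_const (μ : Fin 4) (c : ℝ) (x : Fin 4 → ℝ) : pd μ (fun _ => c) x = 0 := by
  simp [pd]

theorem pd_neg (μ : Fin 4) (F : (Fin 4 → ℝ) → ℝ) (x : Fin 4 → ℝ) :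
    pd μ (fun y => - F y) x = - pd μ F x := by
  simp only [pd]
  rw [fderiv_fun_neg]
  rfl

theorem hasF_f {G m : ℝ} {x : Fin 4 → ℝ} (hx : x ∈ Uchart G m) :
    HasFDerivAt (fS G m) ((G * m / (x 1 ^ 2 * fS G m x)) •
      (ContinuousLinearMap.proj 1 : (Fin 4 → ℝ) →L[ℝ] ℝ)) x ∧ 0 < fS G m x ∧
      fS G m x ^ 2 = 1 - 2 * G * m / x 1 := by
  obtain ⟨h1, h2, -, -⟩ := hx
  have hpos : 0 < 1 - 2 * G * m / x 1 := by
    rw [sub_pos, div_lt_one h2]; exact h1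
  have hf : 0 < fS G m x := Real.sqrt_pos.2 hpos
  refine ⟨?_, hf, Real.sq_sqrt hpos.le⟩
  have hd : HasDerivAt (fun r : ℝ => Real.sqrt (1 - 2 * G * m / r))
      (G * m / (x 1 ^ 2 * fS G m x)) (x 1) := by
    have := (((hasDerivAt_inv h2.ne').const_mul (2 * G * m)).const_sub 1).sqrt
      (by rw [← div_eq_mul_inv]; exact hpos.ne')
    simp only [← div_eq_mul_inv] at this
    refine this.congr_deriv ?_
    change _ / (2 * fS G m x) = _
    field_simp
  have := HasDerivAt.comp_hasFDerivAt (h₂ := fun r : ℝ => Real.sqrt (1 - 2 * G * m / r))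
    (f := (ContinuousLinearMap.proj 1 : (Fin 4 → ℝ) →L[ℝ] ℝ)) x hd
    (ContinuousLinearMap.proj 1 : (Fin 4 → ℝ) →L[ℝ] ℝ).hasFDerivAt
  exact this

theorem pd_f {G m : ℝ} {x : Fin 4 → ℝ} (hx : x ∈ Uchart G m) (μ : Fin 4) :
    pd μ (fun y => fS G m y) x = (if μ = 1 then G * m / (x 1 ^ 2 * fS G m x) else 0) := by
  unfold pd
  rw [(hasF_f hx).1.fderiv]
  simp [Pi.single_apply, eq_comm]

theorem pd_cos (x : Fin 4 → ℝ) (μ : Fin 4) :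
    pd μ (fun y => Real.cos (y 2)) x = (if μ = 2 then - Real.sin (x 2) else 0) := by
  unfold pd
  have := (Real.hasDerivAt_cos (x 2)).comp_hasFDerivAt x
    (ContinuousLinearMap.proj 2 : (Fin 4 → ℝ) →L[ℝ] ℝ).hasFDerivAt
  have e := this.fderiv
  simp only [Function.comp_def, ContinuousLinearMap.proj_apply] at e
  rw [e]
  fin_cases μ <;> simp [Pi.single_apply]

theorem pd_fsin {G m : ℝ} {x : Fin 4 → ℝ} (hx : x ∈ Uchart G m) (μ : Fin 4) :
    pd μ (fun y => fS G m y * Real.sin (y 2)) x =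
      (if μ = 1 then G * m / (x 1 ^ 2 * fS G m x) * Real.sin (x 2) else 0) +
      (if μ = 2 then fS G m x * Real.cos (x 2) else 0) := by
  unfold pd
  have h2 := (Real.hasDerivAt_sin (x 2)).comp_hasFDerivAt x
    (ContinuousLinearMap.proj 2 : (Fin 4 → ℝ) →L[ℝ] ℝ).hasFDerivAt
  have e := ((hasF_f hx).1.mul h2).fderiv
  have e' : (fS G m * (Real.sin ∘ (ContinuousLinearMap.proj 2 : (Fin 4 → ℝ) →L[ℝ] ℝ))) =
    fun y => fS G m y * Real.sin (y 2) := rfl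
  rw [e'] at e
  rw [e]
  fin_cases μ <;> simp [Pi.single_apply, mul_comm]

theorem pd_pot {G m : ℝ} {x : Fin 4 → ℝ} (hx : x ∈ Uchart G m) (μ : Fin 4) (k : ℝ) :
    pd μ (fun y => k / (y 1) ^ 2) x = (if μ = 1 then -2 * k / x 1 ^ 3 else 0) := by
  have h2 : 0 < x 1 := hx.2.1
  have hd : HasDerivAt (fun r : ℝ => k / r ^ 2) (-2 * k / x 1 ^ 3) (x 1) := by
    have := (hasDerivAt_const (x 1) k).div (hasDerivAt_pow 2 (x 1)) (by positivity)
    refine this.congr_deriv ?_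
    field_simp
    simp
    ring
  unfold pd
  have := hd.comp_hasFDerivAt x
    (ContinuousLinearMap.proj 1 : (Fin 4 → ℝ) →L[ℝ] ℝ).hasFDerivAt
  have e := this.fderiv
  simp only [Function.comp_def, ContinuousLinearMap.proj_apply] at e
  rw [e]
  simp [Pi.single_apply, eq_comm]

set_option maxHeartbeats 4000000 in
theorem Rcurv_eq {G m : ℝ} {x : Fin 4 → ℝ} (hx : x ∈ Uchart G m) (a b μ ν : Fin 4) :
    Rcurv G m x a b μ ν = G * m / x 1 ^ 3 * KS a b *
      (Evb G m x a μ * Evb G m x b ν - Evb G m x a ν * Evb G m x b μ) := by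
  have h2 : 0 < x 1 := hx.2.1
  obtain ⟨-, hf, hsq⟩ := hasF_f hx
  have h1 := pd_f hx
  have h3 := pd_fsin hx
  have h4 := pd_pot hx
  have hGm : 2 * (G * m) = x 1 * (1 - fS G m x ^ 2) := by
    rw [hsq]; field_simp; ring
  unfold Rcurv swl
  fin_cases a <;> fin_cases b <;>
  simp [sw, Evb, KS, eta, Fin.sum_univ_four, -neg_mul] <;>
  fin_cases μ <;> fin_cases ν <;>
  simp [pd_const, pd_neg, h1, h3, h4, pd_cos] <;> (try field_simp) <;> (try ring_nf) <;>
    (try first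
      | linear_combination Real.sin (x 2) * hGm
      | linear_combination -Real.sin (x 2) * hGm)

set_option maxHeartbeats 4000000 in
/-- the Schwarzschild data satisfy the vacuum Einstein equation
ε_{a∘∘∘} R^{∘∘} ∧ e^∘ = 0 in components. -/
theorem schwarzschild_vacuum_einstein (G m : ℝ) (hG : 0 < G) (hm : 0 ≤ m)
    (x : Fin 4 → ℝ) (hx : x ∈ Uchart G m) (a μ ν ρ : Fin 4) :
    ∑ b1 : Fin 4, ∑ b2 : Fin 4, ∑ c : Fin 4,
      eps a b1 b2 c *
        (Rcurv G m x b1 b2 μ ν * Evb G m x c ρ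
          + Rcurv G m x b1 b2 ν ρ * Evb G m x c μ
          + Rcurv G m x b1 b2 ρ μ * Evb G m x c ν) = 0 := by
  simp only [Rcurv_eq hx]
  generalize Evb G m x = E
  generalize G * m / x 1 ^ 3 = k
  simp only [eps_eq, KS]
  fin_cases a <;> simp [Fin.sum_univ_four] <;> ring
end
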